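/- arXiv:1612.00401 — 2 statements merged into one kernel-verified Lean document; each statement's English description precedes it below -/
import Mathlib

section
/- Let d₁, d₂ be positive integers with d₁d₂ ≥ 4 and let λ ∈ ℝ^{d₁d₂} be a fixed real vector with power sums μ_k = (1/(d₁d₂)) Σ_i λ_i^k. For U Haar-distributed on U(d₁d₂), set A = U·diag(λ)·Uᴴ, let B ∈ M_{d₁}(ℂ) be d₂^{-1} times the partial trace of A over the second tensor factor, and let v(U) = (1/d₁)Tr(B²) − ((1/d₁)Tr B)². Then the variance of v satisfies E[v²] − (E[v])² = [2(d₁²−1)(d₂²−1) / (d₂²(d₁²d₂²−1)²(d₁⁴d₂⁴ − 13d₁²d₂² + 36))] · (d₁⁴d₂⁴(μ₁²−μ₂)² + d₁²d₂²(11μ₁⁴ − 22μ₂μ₁² + 20μ₃μ₁ − 4μ₂² − 5μ₄) + 5(3μ₂² − 4μ₁μ₃ + μ₄)). -/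
/-!
Write `n = d₁d₂`. Replacing `λ` by `ν = λ - μ₁` adds a scalar matrix to `A` and does not change
`v`, so the spectrum may be assumed to have sum zero; then `v = d₁⁻¹ d₂⁻² Tr((Tr₂ A)²)` and only
`E Tr((Tr₂ A)²)` and `E (Tr((Tr₂ A)²))²` are needed, which are polynomials in the mixed moments
`E ∏ r, A (i r) (j r)` of order two and four.

*Shape of the moments.* By invariance of Haar measure the tensor of moments of order `k`, seen as an
operator on the `k`-th tensor power of `ℂⁿ`, commutes with every `W^{⊗k}`, `W` unitary. Through the
Cayley transform this is a family of polynomial identities that hold on the skew-Hermitian matrices,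
a real form of all matrices, so the operator commutes with `g^{⊗k}` for every complex matrix `g`
(`defect_eq_zero`). When `k ≤ n` the tensor power is generated, over such `g^{⊗k}`, by one basis
vector with distinct indices, whose image is a combination of its permutations; hence the moment
is `∑ σ, c σ ∏ r, δ (i r) (j (σ r))` (`eq_sum_perm`, `exists_moment_eq`), with `c` a class function.

*Solving for `c`.* Contracting the moments along a permutation `τ` gives on one side a product of the
power sums of `ν`, and on the other `∑ σ, c σ n ^ #cycles(τσ)` (`integral_cycleSum`). Over the classes
of `S₄` this is a 5 × 5 linear system whose matrix is read off from the multiplication table of the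
class algebra (`classCoeff`); its solution is given by the Weingarten functions, whose denominator
`n²(n²-1)(n²-4)(n²-9)` does not vanish because `n ≥ 4`.

*Partial trace.* Contracting the same expansion over pairs of indices factors each term into
`d₁ ^ #cycles(τσ) * d₂ ^ #cycles(σ)` (`integral_cycleSum_ptrace`), and with `τ = (01)(23)` or
`τ = (01)` this gives the two expectations. The variance formula is then an identity of rational
functions.
-/

open Matrix MeasureTheory

instance matrixMeasurableSpace {m n α : Type*} [MeasurableSpace α] :
    MeasurableSpace (Matrix m n α) :=
  inferInstanceAs (MeasurableSpace (m → n → α))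

/-- The partial trace over the second tensor factor of a matrix on `ℂ^{d₁} ⊗ ℂ^{d₂}`,
with coordinates identified via `finProdFinEquiv`. -/
noncomputable def ptrace {d₁ d₂ : ℕ} (A : Matrix (Fin (d₁ * d₂)) (Fin (d₁ * d₂)) ℂ) :
    Matrix (Fin d₁) (Fin d₁) ℂ :=
  Matrix.of fun a b => ∑ k : Fin d₂, A (finProdFinEquiv (a, k)) (finProdFinEquiv (b, k))

/-! ### Operators commuting with tensor powers of unitaries -/

section Commutant

lemma prod_diagonal_apply {ι κ : Type*} [DecidableEq ι] [Fintype κ] {R : Type*} [CommRing R]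
    (d : ι → R) (l j : κ → ι) :
    ∏ r, diagonal d (l r) (j r) = if l = j then ∏ r, d (j r) else 0 := by
  split_ifs with h
  · subst h; simp
  · obtain ⟨r, hr⟩ := Function.ne_iff.mp h
    exact Finset.prod_eq_zero (Finset.mem_univ r) (diagonal_apply_ne d hr)

/-- The `(i, j)` entry of the commutator `φ W^{⊗κ} - W^{⊗κ} φ`, where `φ` is the matrix of an
operator on the tensor power `(R^ι)^{⊗κ}`, whose standard basis is indexed by `κ → ι`. -/
def defect {ι κ : Type*} [Fintype ι] [Fintype κ] [DecidableEq κ] {R : Type*} [CommRing R]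
    (φ : (κ → ι) → (κ → ι) → R) (i j : κ → ι) (W : Matrix ι ι R) : R :=
  ∑ l, φ i l * ∏ r, W (l r) (j r) - ∑ l, (∏ r, W (i r) (l r)) * φ l j

lemma defect_smul {ι κ : Type*} [Fintype ι] [Fintype κ] [DecidableEq κ]
    {R : Type*} [CommRing R] (φ : (κ → ι) → (κ → ι) → R) (i j : κ → ι)
    (c : R) (W : Matrix ι ι R) :
    defect φ i j (c • W) = c ^ Fintype.card κ * defect φ i j W := by
  simp only [defect, Matrix.smul_apply, smul_eq_mul, Finset.prod_mul_distrib, Finset.prod_const,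
    Finset.card_univ, mul_sub, Finset.mul_sum]
  congr 1 <;> refine Finset.sum_congr rfl fun l _ => by ring

lemma map_defect {ι κ : Type*} [Fintype ι] [Fintype κ] [DecidableEq κ]
    {R S : Type*} [CommRing R] [CommRing S] (f : R →+* S)
    (φ : (κ → ι) → (κ → ι) → R) (i j : κ → ι) (W : Matrix ι ι R) :
    f (defect φ i j W) = defect (fun a b => f (φ a b)) i j (W.map f) := by
  simp [defect, map_sub, map_sum, map_prod]

open scoped ComplexOrder in
/-- For `X` skew-Hermitian the Cayley transform `(1 + X)(1 - X)⁻¹` is unitary. Replacing the inverse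
by the adjugate only rescales it, and makes the statement polynomial in `X`. -/
lemma defect_cayley_of_skew {ι κ : Type*} [Fintype ι] [DecidableEq ι] [Fintype κ]
    [DecidableEq κ] {φ : (κ → ι) → (κ → ι) → ℂ}
    (h : ∀ W ∈ unitaryGroup ι ℂ, ∀ i j, defect φ i j W = 0) (i j : κ → ι)
    {X : Matrix ι ι ℂ} (hX : Xᴴ = -X) :
    defect φ i j ((1 + X) * adjugate (1 - X)) = 0 := by
  have hpos : ((1 - X) * (1 + X)).PosDef := by
    have : (1 - X) * (1 + X) = 1 + X * Xᴴ := by rw [hX]; noncomm_ring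
    rw [this]
    exact PosDef.one.add_posSemidef (posSemidef_self_mul_conjTranspose X)
  have hdet : IsUnit ((1 - X).det * (1 + X).det) := by
    rw [← det_mul]; exact isUnit_iff_ne_zero.mpr hpos.det_pos.ne'
  have h1 : IsUnit (1 - X).det := isUnit_of_mul_isUnit_left hdet
  have h2 : IsUnit (1 + X).det := isUnit_of_mul_isUnit_right hdet
  have hcomm : (1 + X) * (1 - X) = (1 - X) * (1 + X) := by noncomm_ring
  have hadj : adjugate (1 - X) = (1 - X).det • (1 - X)⁻¹ := by
    rw [inv_def, smul_smul, Ring.mul_inverse_cancel _ h1, one_smul]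
  have hU : (1 + X) * (1 - X)⁻¹ ∈ unitaryGroup ι ℂ := by
    rw [mem_unitaryGroup_iff, star_eq_conjTranspose, conjTranspose_mul,
      conjTranspose_nonsing_inv, conjTranspose_add, conjTranspose_sub, conjTranspose_one, hX,
      sub_neg_eq_add, ← sub_eq_add_neg]
    calc (1 + X) * (1 - X)⁻¹ * ((1 + X)⁻¹ * (1 - X))
        = (1 + X) * ((1 - X)⁻¹ * (1 + X)⁻¹) * (1 - X) := by noncomm_ring
      _ = (1 + X) * ((1 + X)⁻¹ * (1 - X)⁻¹) * (1 - X) := by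
          rw [← Matrix.mul_inv_rev, ← Matrix.mul_inv_rev, hcomm]
      _ = ((1 + X) * (1 + X)⁻¹) * ((1 - X)⁻¹ * (1 - X)) := by noncomm_ring
      _ = 1 := by rw [mul_nonsing_inv _ h2, nonsing_inv_mul _ h1, one_mul]
  rw [hadj, mul_smul_comm, defect_smul, h _ hU, mul_zero]

/-- Weyl's unitarian trick: write `X = K + I • L` with `K`, `L` skew-Hermitian. The defect at
`K + t • L` is a polynomial in `t` vanishing at all real `t`, hence at `t = I`. -/
lemma defect_cayley {ι κ : Type*} [Fintype ι] [DecidableEq ι] [Fintype κ]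
    [DecidableEq κ] {φ : (κ → ι) → (κ → ι) → ℂ}
    (h : ∀ W ∈ unitaryGroup ι ℂ, ∀ i j, defect φ i j W = 0) (i j : κ → ι)
    (X : Matrix ι ι ℂ) :
    defect φ i j ((1 + X) * adjugate (1 - X)) = 0 := by
  obtain ⟨K, hK⟩ : ∃ K : Matrix ι ι ℂ, K = (1 / 2 : ℂ) • (X - Xᴴ) := ⟨_, rfl⟩
  obtain ⟨L, hL⟩ : ∃ L : Matrix ι ι ℂ, L = (-Complex.I / 2) • (X + Xᴴ) := ⟨_, rfl⟩
  have hKs : Kᴴ = -K := by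
    rw [hK, conjTranspose_smul, conjTranspose_sub, conjTranspose_conjTranspose, ← smul_neg,
      neg_sub]
    congr 1; simp
  have hLs : Lᴴ = -L := by
    rw [hL, conjTranspose_smul, conjTranspose_add, conjTranspose_conjTranspose, ← neg_smul,
      add_comm]
    congr 1; simp [neg_div]
  have hX : X = K + Complex.I • L := by
    rw [hK, hL, smul_smul]
    have : Complex.I * (-Complex.I / 2) = 1 / 2 := by
      linear_combination (-1 / 2 : ℂ) * Complex.I_mul_I
    rw [this, ← smul_add, sub_add_add_cancel, ← two_smul ℂ X, smul_smul]; norm_num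
  let Z : Matrix ι ι (Polynomial ℂ) :=
    K.map Polynomial.C + (Polynomial.X : Polynomial ℂ) • L.map Polynomial.C
  let P : Polynomial ℂ :=
    defect (fun a b => Polynomial.C (φ a b)) i j ((1 + Z) * adjugate (1 - Z))
  have hZ (t : ℂ) : Z.map (Polynomial.evalRingHom t) = K + t • L := by
    ext a b
    simpa [Z] using mul_comm _ _
  have hP (t : ℂ) : P.eval t = defect φ i j ((1 + (K + t • L)) * adjugate (1 - (K + t • L))) := by
    have h0 := map_defect (Polynomial.evalRingHom t) (fun a b => Polynomial.C (φ a b)) i j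
      ((1 + Z) * adjugate (1 - Z))
    have hm : ((1 + Z) * adjugate (1 - Z)).map (Polynomial.evalRingHom t)
        = (1 + (K + t • L)) * adjugate (1 - (K + t • L)) := by
      have e : ∀ Y : Matrix ι ι (Polynomial ℂ), Y.map (Polynomial.evalRingHom t)
        = (Polynomial.evalRingHom t).mapMatrix Y := fun Y => rfl
      rw [e, map_mul, RingHom.map_adjugate, map_add, map_sub, map_one, ← e, hZ]
    rw [hm] at h0
    simpa [P] using h0
  have hP0 : P = 0 := by
    refine Polynomial.eq_zero_of_infinite_isRoot P
      (Set.Infinite.mono (s := Set.range ((↑) : ℝ → ℂ)) ?_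
        (Set.infinite_range_of_injective Complex.ofReal_injective))
    rintro _ ⟨t, rfl⟩
    change P.eval _ = 0
    rw [hP]
    refine defect_cayley_of_skew h i j ?_
    rw [conjTranspose_add, conjTranspose_smul, hLs, show Kᴴ = -K from hKs]
    simp [add_comm]
  have := hP Complex.I
  rw [hP0, Polynomial.eval_zero, ← hX] at this
  exact this.symm

/-- An operator commuting with `W^{⊗κ}` for all unitary `W` commutes with `g^{⊗κ}` for every complex
matrix `g`: for a suitable scalar `c ≠ 0` the matrix `c • g` is a Cayley transform. -/
lemma defect_eq_zero {ι κ : Type*} [Fintype ι] [DecidableEq ι] [Fintype κ]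
    [DecidableEq κ] {φ : (κ → ι) → (κ → ι) → ℂ}
    (h : ∀ W ∈ unitaryGroup ι ℂ, ∀ i j, defect φ i j W = 0) (i j : κ → ι)
    (g : Matrix ι ι ℂ) : defect φ i j g = 0 := by
  -- `1 + c • g` is invertible for all but finitely many `c`, since its determinant is `1` at `c = 0`.
  obtain ⟨c, hc0, hc⟩ : ∃ c : ℂ, c ≠ 0 ∧ IsUnit (1 + c • g).det := by
    let Q : Polynomial ℂ := (1 + (Polynomial.X : Polynomial ℂ) • g.map Polynomial.C).det
    have hQ (t : ℂ) : Q.eval t = (1 + t • g).det := by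
      have := RingHom.map_det (Polynomial.evalRingHom t)
        (1 + (Polynomial.X : Polynomial ℂ) • g.map Polynomial.C)
      rw [map_add, map_one] at this
      change Q.eval t = _ at this
      rw [this]; congr 2; ext a b; simpa using mul_comm _ _
    have hQ0 : Polynomial.X * Q ≠ 0 := by
      refine mul_ne_zero Polynomial.X_ne_zero fun h0 => ?_
      have := hQ 0
      simp [h0] at this
    obtain ⟨c, hc⟩ := Polynomial.exists_eval_ne_zero_of_natDegree_lt_card _ hQ0 (by
      rw [Cardinal.mk_complex]
      exact (Cardinal.natCast_lt_aleph0).trans Cardinal.aleph0_lt_continuum)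
    rw [Polynomial.eval_mul, Polynomial.eval_X, hQ] at hc
    exact ⟨c, left_ne_zero_of_mul hc, isUnit_iff_ne_zero.mpr (right_ne_zero_of_mul hc)⟩
  set S := 1 + c • g with hS
  have hSS : S * S⁻¹ = 1 := mul_nonsing_inv _ hc
  have hSS' : S⁻¹ * S = 1 := nonsing_inv_mul _ hc
  -- `X` is the inverse Cayley transform of `c • g`.
  set X := (c • g - 1) * S⁻¹ with hX
  have hm : 1 - X = (2 : ℂ) • S⁻¹ := by
    have : c • g - 1 = S - 2 := by
      rw [hS, ← one_add_one_eq_two]; abel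
    rw [hX, this, sub_mul, hSS, sub_sub_cancel, two_smul, two_mul]
  have hp : 1 + X = (2 * c) • (g * S⁻¹) := by
    have : 1 + X = (S + (c • g - 1)) * S⁻¹ := by rw [add_mul, hSS]
    have h2 : S + (c • g - 1) = (2 * c) • g := by
      rw [hS, mul_smul, two_smul]; abel
    rw [this, h2, smul_mul_assoc]
  have hu : IsUnit (1 - X).det := by
    rw [hm, det_smul]
    refine IsUnit.mul (by simp) ?_
    exact (isUnit_nonsing_inv_det_iff).mpr hc
  have hadj : adjugate (1 - X) = (1 - X).det • ((1 / 2 : ℂ) • S) := by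
    have hinv : (1 - X)⁻¹ = (1 / 2 : ℂ) • S := by
      refine inv_eq_right_inv ?_
      rw [hm, smul_mul_smul_comm, hSS']; norm_num
    rw [← hinv, inv_def, smul_smul, Ring.mul_inverse_cancel _ hu, one_smul]
  have key := defect_cayley h i j X
  have hprod : (1 + X) * adjugate (1 - X) = ((1 - X).det * c) • g := by
    rw [hadj, hp, mul_smul_comm, smul_mul_smul_comm, mul_assoc g, hSS', mul_one, smul_smul]
    congr 1; ring
  rw [hprod, defect_smul] at key
  exact (mul_eq_zero.mp key).resolve_left (pow_ne_zero _ (mul_ne_zero hu.ne_zero hc0))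

/-- Schur–Weyl duality in the range `#κ ≤ #ι`: an operator on the tensor power commuting with all
`W^{⊗κ}`, `W` unitary, is a combination of the permutations of the tensor factors. The coefficients
are the coordinates of the image of the basis vector `e`, whose indices are distinct. -/
lemma eq_sum_perm {ι κ : Type*} [Fintype ι] [DecidableEq ι] [Fintype κ]
    [DecidableEq κ] {φ : (κ → ι) → (κ → ι) → ℂ}
    (h : ∀ W ∈ unitaryGroup ι ℂ, ∀ i j, defect φ i j W = 0) (e : κ ↪ ι) (i j : κ → ι) :
    φ i j = ∑ σ : Equiv.Perm κ, φ (e ∘ σ) e * ∏ r, (1 : Matrix ι ι ℂ) (i r) (j (σ r)) := by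
  -- The image of the basis vector `e` only involves rearrangements of `e`.
  have hz : ∀ l : κ → ι, l ∉ Set.range (fun σ : Equiv.Perm κ => (e ∘ σ : κ → ι)) → φ l e = 0 := by
    intro l hl
    by_cases hc : ∀ c, ∃ r, l r = e c
    · choose f hf using hc
      have hinj : Function.Injective f := fun a b hab => e.injective (by rw [← hf, ← hf, hab])
      let τ := Equiv.ofBijective f (Finite.injective_iff_bijective.mp hinj)
      refine absurd ⟨τ.symm, ?_⟩ hl
      funext r
      have := hf (τ.symm r)
      change l (τ (τ.symm r)) = _ at this
      simpa using this.symm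
    · push Not at hc
      obtain ⟨c, hc⟩ := hc
      -- Commute with the projection that kills the coordinate `e c`, which `l` avoids.
      have := defect_eq_zero h l e (diagonal fun a => if a = e c then 0 else 1)
      simp only [defect, prod_diagonal_apply] at this
      simp only [mul_ite, mul_zero, ite_mul, zero_mul, Finset.sum_ite_eq, Finset.sum_ite_eq',
        Finset.mem_univ, if_true] at this
      rw [Finset.prod_eq_zero (Finset.mem_univ c) (by simp),
        Finset.prod_eq_one (fun r _ => by simp [hc r])] at this
      simpa using this
  -- The matrix `g` sends the basis vector of index `e r` to that of index `j r`, so that `g^{⊗κ}`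
  -- carries the basis vector `e` to the basis vector `j`.
  let g : Matrix ι ι ℂ := of fun a b =>
    ∑ r, (1 : Matrix ι ι ℂ) a (j r) * (1 : Matrix ι ι ℂ) b (e r)
  have hg (a : ι) (r : κ) : g a (e r) = (1 : Matrix ι ι ℂ) a (j r) := by
    simp [g, one_apply, e.injective.eq_iff]
  have key := sub_eq_zero.mp (defect_eq_zero h i e g)
  simp only [hg] at key
  simp only [← diagonal_one, prod_diagonal_apply] at key
  simp only [Finset.prod_const_one, mul_ite, mul_one, mul_zero,
    Finset.sum_ite_eq', Finset.mem_univ, if_true] at key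
  rw [key]
  refine (Fintype.sum_of_injective (fun σ : Equiv.Perm κ => (e ∘ σ : κ → ι)) ?_ _ _ ?_ ?_).symm
  · intro σ τ hst
    ext r
    exact e.injective (congrFun hst r)
  · intro l hl
    rw [hz l hl, mul_zero]
  · intro σ
    simp only [Function.comp, hg]
    rw [mul_comm]

end Commutant

/-! ### Contractions along permutations and the class algebra of `S₄` -/

section CycleSum

/-- The contraction of `C^{⊗κ}` along the permutation `ρ`: the product over the cycles of `ρ` of
`Tr (C ^ m)`, where `m` is the length of the cycle. -/
def cycleSum {ι κ R : Type*} [Fintype ι] [Fintype κ] [DecidableEq κ] [CommRing R]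
    (C : Matrix ι ι R) (ρ : Equiv.Perm κ) : R :=
  ∑ α : κ → ι, ∏ r, C (α r) (α (ρ r))

lemma cycleSum_conj {ι κ R : Type*} [Fintype ι] [Fintype κ] [DecidableEq κ] [CommRing R]
    (C : Matrix ι ι R) (π ρ : Equiv.Perm κ) :
    cycleSum C (π * ρ * π⁻¹) = cycleSum C ρ := by
  refine Fintype.sum_equiv (π.symm.arrowCongr (Equiv.refl ι)) _ _ fun α => ?_
  refine (Fintype.prod_equiv π _ _ fun r => ?_).symm
  simp [Equiv.arrowCongr]

/-- Representatives of the conjugacy classes of `S₄`, of cycle types `1⁴, 21², 2², 31, 4` in this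
order. -/
def rep : Fin 5 → Equiv.Perm (Fin 4) :=
  ![1, c[0, 1], c[0, 1] * c[2, 3], c[0, 1, 2], c[0, 1, 2, 3]]

/-- The index of the conjugacy class of `σ` in the list `rep`, found from the number of fixed points
and, when there are none, from whether `σ` is an involution. -/
def cls (σ : Equiv.Perm (Fin 4)) : Fin 5 :=
  let f := (Finset.univ.filter fun r => σ r = r).card
  if f = 4 then 0 else if f = 2 then 1 else if f = 1 then 3 else if σ * σ = 1 then 2 else 4

lemma exists_conj_rep : ∀ σ : Equiv.Perm (Fin 4), ∃ π, σ = π * rep (cls σ) * π⁻¹ := by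
  decide +kernel

/-- The structure constants of the class algebra of `S₄`: `classCoeff w u v` is the number of `σ` in
the class `u` such that `rep w * σ` is in the class `v`; see `card_filter_cls`. -/
def classCoeff : Fin 5 → Fin 5 → Fin 5 → ℕ :=
  ![![![1, 0, 0, 0, 0], ![0, 6, 0, 0, 0], ![0, 0, 3, 0, 0], ![0, 0, 0, 8, 0], ![0, 0, 0, 0, 6]],
    ![![0, 1, 0, 0, 0], ![1, 0, 1, 4, 0], ![0, 1, 0, 0, 2], ![0, 4, 0, 0, 4], ![0, 0, 2, 4, 0]],
    ![![0, 0, 1, 0, 0], ![0, 2, 0, 0, 4], ![1, 0, 2, 0, 0], ![0, 0, 0, 8, 0], ![0, 4, 0, 0, 2]],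
    ![![0, 0, 0, 1, 0], ![0, 3, 0, 0, 3], ![0, 0, 0, 3, 0], ![1, 0, 3, 4, 0], ![0, 3, 0, 0, 3]],
    ![![0, 0, 0, 0, 1], ![0, 0, 2, 4, 0], ![0, 2, 0, 0, 1], ![0, 4, 0, 0, 4], ![1, 0, 1, 4, 0]]]

lemma card_filter_cls : ∀ w u v, (Finset.univ.filter fun σ : Equiv.Perm (Fin 4) =>
    (cls σ, cls (rep w * σ)) = (u, v)).card = classCoeff w u v := by
  decide +kernel

lemma sum_perm_eq {R : Type*} [CommRing R] (w : Fin 5) (F : Fin 5 → Fin 5 → R) :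
    ∑ σ : Equiv.Perm (Fin 4), F (cls σ) (cls (rep w * σ))
      = ∑ u, ∑ v, (classCoeff w u v : R) * F u v := by
  rw [← Fintype.sum_prod_type' (f := fun u v => (classCoeff w u v : R) * F u v),
    ← Finset.sum_fiberwise Finset.univ (fun σ => (cls σ, cls (rep w * σ)))]
  refine Finset.sum_congr rfl fun p _ => ?_
  rw [← card_filter_cls, ← nsmul_eq_mul, ← Finset.sum_const]
  refine Finset.sum_congr rfl fun σ hσ => ?_
  have hp := (Finset.mem_filter.mp hσ).2
  rw [Prod.mk.injEq] at hp
  rw [hp.1, hp.2]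

lemma sum_fin_four {ι R : Type*} [Fintype ι] [CommRing R] (F : (Fin 4 → ι) → R) :
    ∑ α, F α = ∑ a, ∑ b, ∑ c, ∑ d, F ![a, b, c, d] := by
  rw [← (Fin.consEquiv fun _ => ι).sum_comp, Fintype.sum_prod_type]
  refine Finset.sum_congr rfl fun a _ => ?_
  rw [← (Fin.consEquiv fun _ => ι).sum_comp, Fintype.sum_prod_type]
  refine Finset.sum_congr rfl fun b _ => ?_
  rw [← (Fin.consEquiv fun _ => ι).sum_comp, Fintype.sum_prod_type]
  refine Finset.sum_congr rfl fun c _ => ?_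
  rw [← (Fin.consEquiv fun _ => ι).sum_comp, Fintype.sum_prod_type]
  refine Finset.sum_congr rfl fun d _ => ?_
  rw [Fintype.sum_unique]
  congr 1

lemma cycleSum_rep {ι R : Type*} [Fintype ι] [DecidableEq ι] [CommRing R] (C : Matrix ι ι R)
    (w : Fin 5) :
    cycleSum C (rep w) = ![trace C ^ 4, trace (C ^ 2) * trace C ^ 2, trace (C ^ 2) ^ 2,
      trace (C ^ 3) * trace C, trace (C ^ 4)] w := by
  have e1 : ⇑(rep 1) = ![1, 0, 2, 3] := by decide +kernel
  have e2 : ⇑(rep 2) = ![1, 0, 3, 2] := by decide +kernel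
  have e3 : ⇑(rep 3) = ![1, 2, 0, 3] := by decide +kernel
  have e4 : ⇑(rep 4) = ![1, 2, 3, 0] := by decide +kernel
  have h1 : trace C = ∑ a, C a a := rfl
  have h2 : trace (C ^ 2) = ∑ a, ∑ b, C a b * C b a := by
    simp [trace, pow_succ, mul_apply]
  have h3 : trace (C ^ 3) = ∑ a, ∑ b, ∑ c, C a b * C b c * C c a := by
    simp only [trace, diag, pow_succ, pow_zero, one_mul, mul_apply, Finset.sum_mul]
    exact Finset.sum_congr rfl fun a _ => Finset.sum_comm
  have h4 : trace (C ^ 4) = ∑ a, ∑ b, ∑ c, ∑ d, C a b * C b c * C c d * C d a := by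
    rw [show C ^ 4 = C * (C * (C * C)) by noncomm_ring]
    simp only [trace, diag, mul_apply, Finset.mul_sum, mul_assoc]
  rw [cycleSum, sum_fin_four]
  simp only [Fin.prod_univ_four]
  fin_cases w
  · change ∑ a, ∑ b, ∑ c, ∑ d, C a a * C b b * C c c * C d d = trace C ^ 4
    rw [show trace C ^ 4 = trace C * (trace C * (trace C * trace C)) by ring, h1]
    simp only [Finset.sum_mul]
    simp only [Finset.mul_sum, mul_assoc]
  · change _ = trace (C ^ 2) * trace C ^ 2
    simp only [Fin.mk_one, e1]
    change ∑ a, ∑ b, ∑ c, ∑ d, C a b * C b a * C c c * C d d = _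
    rw [show trace (C ^ 2) * trace C ^ 2 = trace (C ^ 2) * (trace C * trace C) by ring, h1, h2]
    simp only [Finset.sum_mul]
    simp only [Finset.mul_sum, mul_assoc]
  · change _ = trace (C ^ 2) ^ 2
    simp only [Fin.reduceFinMk, e2]
    change ∑ a, ∑ b, ∑ c, ∑ d, C a b * C b a * C c d * C d c = _
    rw [sq, h2]
    simp only [Finset.sum_mul]
    simp only [Finset.mul_sum, mul_assoc]
  · change _ = trace (C ^ 3) * trace C
    simp only [Fin.reduceFinMk, e3]
    change ∑ a, ∑ b, ∑ c, ∑ d, C a b * C b c * C c a * C d d = _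
    rw [h1, h3]
    simp only [Finset.sum_mul]
    simp only [Finset.mul_sum, mul_assoc]
  · change _ = trace (C ^ 4)
    simp only [Fin.reduceFinMk, e4]
    change ∑ a, ∑ b, ∑ c, ∑ d, C a b * C b c * C c d * C d a = _
    rw [h4]

lemma cycleSum_eq_cls {ι R : Type*} [Fintype ι] [CommRing R] (C : Matrix ι ι R)
    (σ : Equiv.Perm (Fin 4)) : cycleSum C σ = cycleSum C (rep (cls σ)) := by
  obtain ⟨π, hπ⟩ := exists_conj_rep σ
  conv_lhs => rw [hπ]
  exact cycleSum_conj C π _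

/-- `cycleSum 1 σ = n ^ #cycles(σ)`; the exponents are the numbers of cycles, fixed points included,
of the five classes. -/
lemma cycleSum_one {ι R : Type*} [Fintype ι] [DecidableEq ι] [CommRing R]
    (σ : Equiv.Perm (Fin 4)) :
    cycleSum (1 : Matrix ι ι R) σ = (Fintype.card ι : R) ^ (![4, 3, 2, 2, 1] (cls σ) : ℕ) := by
  rw [cycleSum_eq_cls, cycleSum_rep]
  generalize cls σ = w
  fin_cases w <;> simp <;> ring

end CycleSum

/-! ### Moments of the entries under Haar measure -/

section Haar

instance compactSpace_unitaryGroup {ι : Type*} [Fintype ι] [DecidableEq ι] :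
    CompactSpace (unitaryGroup ι ℂ) := by
  refine isCompact_iff_compactSpace.mp ?_
  have hK : IsCompact (Set.univ.pi fun _ : ι => Set.univ.pi fun _ : ι =>
      Metric.closedBall (0 : ℂ) 1) :=
    isCompact_univ_pi fun _ => isCompact_univ_pi fun _ => isCompact_closedBall _ _
  refine hK.of_isClosed_subset (t := (unitaryGroup ι ℂ : Set (Matrix ι ι ℂ))) ?_ ?_
  · have : (unitaryGroup ι ℂ : Set (Matrix ι ι ℂ)) = {U | U * star U = 1} := by
      ext U; exact mem_unitaryGroup_iff
    rw [this]
    exact isClosed_eq (by fun_prop) continuous_const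
  · intro U hU a _ b _
    simpa using entry_norm_bound_of_unitary hU a b

instance borelSpace_matrix {ι : Type*} [Fintype ι] : BorelSpace (Matrix ι ι ℂ) :=
  inferInstanceAs (BorelSpace (ι → ι → ℂ))

/-- The random matrix `U diag(ν) Uᴴ`. -/
def conjDiag {ι : Type*} [Fintype ι] [DecidableEq ι] (ν : ι → ℂ) (U : unitaryGroup ι ℂ) :
    Matrix ι ι ℂ :=
  (U : Matrix ι ι ℂ) * diagonal ν * (U : Matrix ι ι ℂ)ᴴ

lemma continuous_conjDiag {ι : Type*} [Fintype ι] [DecidableEq ι] (ν : ι → ℂ) :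
    Continuous (conjDiag ν) := by
  unfold conjDiag
  fun_prop

lemma integrable_of_continuous {ι : Type*} [Fintype ι] [DecidableEq ι]
    (μ : Measure (unitaryGroup ι ℂ)) [μ.IsHaarMeasure] {f : unitaryGroup ι ℂ → ℂ}
    (hf : Continuous f) : Integrable f μ :=
  hf.integrable_of_hasCompactSupport (HasCompactSupport.of_compactSpace f)

/-- The mixed moment `E ∏ r, A (i r) (j r)` of the entries of `A = U diag(ν) Uᴴ`. -/
noncomputable def moment {ι κ : Type*} [Fintype ι] [DecidableEq ι] [Fintype κ]
    (μ : Measure (unitaryGroup ι ℂ)) (ν : ι → ℂ) (i j : κ → ι) : ℂ :=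
  ∫ U, ∏ r, conjDiag ν U (i r) (j r) ∂μ

lemma integrable_moment {ι κ : Type*} [Fintype ι] [DecidableEq ι] [Fintype κ]
    (μ : Measure (unitaryGroup ι ℂ)) [μ.IsHaarMeasure] (ν : ι → ℂ) (i j : κ → ι) :
    Integrable (fun U => ∏ r, conjDiag ν U (i r) (j r)) μ := by
  refine integrable_of_continuous μ (continuous_finsetProd _ fun r _ => ?_)
  exact (continuous_conjDiag ν).matrix_elem _ _

lemma conjDiag_mul {ι : Type*} [Fintype ι] [DecidableEq ι] (ν : ι → ℂ) (W U : unitaryGroup ι ℂ) :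
    conjDiag ν (W * U) * (W : Matrix ι ι ℂ) = (W : Matrix ι ι ℂ) * conjDiag ν U := by
  have h : (W : Matrix ι ι ℂ)ᴴ * (W : Matrix ι ι ℂ) = 1 := mem_unitaryGroup_iff'.mp W.2
  simp only [conjDiag, Submonoid.coe_mul, conjTranspose_mul, mul_assoc, h, mul_one]

/-- By left invariance of `μ`, the tensor of moments commutes with `W^{⊗κ}` for `W` unitary. -/
lemma defect_moment {ι κ : Type*} [Fintype ι] [DecidableEq ι] [Fintype κ] [DecidableEq κ]
    (μ : Measure (unitaryGroup ι ℂ)) [μ.IsHaarMeasure] (ν : ι → ℂ) :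
    ∀ W ∈ unitaryGroup ι ℂ, ∀ i j : κ → ι, defect (moment μ ν) i j W = 0 := by
  intro W hW i j
  have hl : ∑ l, moment μ ν i l * ∏ r, W (l r) (j r)
      = ∫ U, ∏ r, (conjDiag ν U * W) (i r) (j r) ∂μ := by
    simp only [moment, ← integral_mul_const, mul_apply, Finset.prod_univ_sum,
      Fintype.piFinset_univ]
    rw [← integral_finsetSum _ fun l _ => (integrable_moment μ ν i l).mul_const _]
    simp only [Finset.prod_mul_distrib]
  have hr : ∑ l, (∏ r, W (i r) (l r)) * moment μ ν l j
      = ∫ U, ∏ r, (W * conjDiag ν U) (i r) (j r) ∂μ := by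
    simp only [moment, ← integral_const_mul, mul_apply, Finset.prod_univ_sum,
      Fintype.piFinset_univ]
    rw [← integral_finsetSum _ fun l _ => (integrable_moment μ ν l j).const_mul _]
    simp only [Finset.prod_mul_distrib]
  have hinv := integral_mul_left_eq_self (μ := μ)
    (fun U => ∏ r, (conjDiag ν U * W) (i r) (j r)) ⟨W, hW⟩
  rw [defect, hl, hr, ← hinv, sub_eq_zero]
  refine integral_congr_ae (.of_forall fun U => ?_)
  simp only [← conjDiag_mul ν ⟨W, hW⟩ U]

/-- Expansion of the moments in products of Kronecker deltas. The coefficient of `σ` can be taken to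
be the moment at `(e ∘ σ, e)`; it depends only on the class of `σ` because the moments at
`(e ∘ σ, e)` and `(e ∘ π ∘ σ, e ∘ π)` agree. -/
lemma exists_moment_eq {ι κ : Type*} [Fintype ι] [DecidableEq ι] [Fintype κ] [DecidableEq κ]
    (μ : Measure (unitaryGroup ι ℂ)) [μ.IsHaarMeasure] (ν : ι → ℂ) (e : κ ↪ ι) :
    ∃ c : Equiv.Perm κ → ℂ, (∀ π σ, c (π * σ * π⁻¹) = c σ) ∧ ∀ i j : κ → ι,
      moment μ ν i j = ∑ σ, c σ * ∏ r, (1 : Matrix ι ι ℂ) (i r) (j (σ r)) := by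
  have hexp := eq_sum_perm (defect_moment (κ := κ) μ ν) e
  refine ⟨fun σ => moment μ ν (e ∘ σ) e, fun π σ => ?_, hexp⟩
  have hre : moment μ ν (e ∘ (π * σ * π⁻¹ : Equiv.Perm κ)) e = moment μ ν (e ∘ π ∘ σ) (e ∘ π) := by
    refine integral_congr_ae (.of_forall fun U => ?_)
    exact (Fintype.prod_equiv π _ _ fun r => by simp).symm
  change moment μ ν (e ∘ (π * σ * π⁻¹ : Equiv.Perm κ)) e = _
  -- As `e ∘ π` is injective, only the term of `σ` survives in the expansion.
  rw [hre, hexp, Finset.sum_eq_single σ]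
  · have h1 : ∏ r, (1 : Matrix ι ι ℂ) (e (π (σ r))) (e (π (σ r))) = 1 :=
      Finset.prod_eq_one fun r _ => one_apply_eq _
    exact (congrArg (moment μ ν (e ∘ σ) e * ·) h1).trans (mul_one _)
  · intro τ _ hτ
    obtain ⟨r, hr⟩ := DFunLike.ne_iff.mp hτ.symm
    rw [Finset.prod_eq_zero (Finset.mem_univ r), mul_zero]
    exact one_apply_ne (by simpa using hr)
  · simp

lemma integral_cycleSum {ι κ : Type*} [Fintype ι] [DecidableEq ι] [Fintype κ] [DecidableEq κ]
    (μ : Measure (unitaryGroup ι ℂ)) [μ.IsHaarMeasure] (ν : ι → ℂ) {c : Equiv.Perm κ → ℂ}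
    (hc : ∀ i j : κ → ι,
      moment μ ν i j = ∑ σ, c σ * ∏ r, (1 : Matrix ι ι ℂ) (i r) (j (σ r)))
    (τ : Equiv.Perm κ) :
    ∫ U, cycleSum (conjDiag ν U) τ ∂μ = ∑ σ, c σ * cycleSum (1 : Matrix ι ι ℂ) (τ * σ) := by
  simp only [cycleSum, Finset.mul_sum]
  rw [integral_finsetSum _ fun i _ => integrable_moment μ ν i fun r => i (τ r), Finset.sum_comm]
  exact Finset.sum_congr rfl fun i _ => hc i fun r => i (τ r)

lemma cycleSum_ptrace {κ : Type*} [Fintype κ] [DecidableEq κ] {d₁ d₂ : ℕ}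
    (A : Matrix (Fin (d₁ * d₂)) (Fin (d₁ * d₂)) ℂ) (τ : Equiv.Perm κ) :
    cycleSum (ptrace A) τ = ∑ α : κ → Fin d₁, ∑ β : κ → Fin d₂,
      ∏ r, A (finProdFinEquiv (α r, β r)) (finProdFinEquiv (α (τ r), β r)) := by
  simp only [cycleSum, ptrace, of_apply, Finset.prod_univ_sum, Fintype.piFinset_univ]

/-- Partial tracing contracts the second indices along the identity and the first ones along `τ`, so
each Kronecker product splits into a cycle count in dimension `d₁` and one in dimension `d₂`. -/
lemma integral_cycleSum_ptrace {κ : Type*} [Fintype κ] [DecidableEq κ] {d₁ d₂ : ℕ}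
    (μ : Measure (unitaryGroup (Fin (d₁ * d₂)) ℂ)) [μ.IsHaarMeasure] (ν : Fin (d₁ * d₂) → ℂ)
    {c : Equiv.Perm κ → ℂ}
    (hc : ∀ i j : κ → Fin (d₁ * d₂), moment μ ν i j
      = ∑ σ, c σ * ∏ r, (1 : Matrix (Fin (d₁ * d₂)) (Fin (d₁ * d₂)) ℂ) (i r) (j (σ r)))
    (τ : Equiv.Perm κ) :
    ∫ U, cycleSum (ptrace (conjDiag ν U)) τ ∂μ
      = ∑ σ, c σ * (cycleSum (1 : Matrix (Fin d₁) (Fin d₁) ℂ) (τ * σ)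
          * cycleSum (1 : Matrix (Fin d₂) (Fin d₂) ℂ) σ) := by
  simp only [cycleSum_ptrace]
  rw [integral_finsetSum _ fun α _ => integrable_finsetSum _ fun β _ =>
    integrable_moment μ ν (fun r => finProdFinEquiv (α r, β r))
      fun r => finProdFinEquiv (α (τ r), β r)]
  have hexp (σ : Equiv.Perm κ) : c σ * (cycleSum (1 : Matrix (Fin d₁) (Fin d₁) ℂ) (τ * σ)
      * cycleSum (1 : Matrix (Fin d₂) (Fin d₂) ℂ) σ) = ∑ α : κ → Fin d₁, ∑ β : κ → Fin d₂,
        c σ * ((∏ r, (1 : Matrix (Fin d₁) (Fin d₁) ℂ) (α r) (α (τ (σ r))))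
          * ∏ r, (1 : Matrix (Fin d₂) (Fin d₂) ℂ) (β r) (β (σ r))) := by
    rw [cycleSum, cycleSum, Finset.sum_mul_sum]
    simp only [Finset.mul_sum]
    rfl
  simp only [hexp]
  rw [Finset.sum_comm]
  refine Finset.sum_congr rfl fun α _ => ?_
  rw [integral_finsetSum _ fun β _ =>
    integrable_moment μ ν (fun r => finProdFinEquiv (α r, β r))
      fun r => finProdFinEquiv (α (τ r), β r), Finset.sum_comm]
  refine Finset.sum_congr rfl fun β _ => ?_
  refine (hc (fun r => finProdFinEquiv (α r, β r))
    fun r => finProdFinEquiv (α (τ r), β r)).trans ?_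
  refine Finset.sum_congr rfl fun σ _ => ?_
  rw [← Finset.prod_mul_distrib]
  congr 1
  refine Finset.prod_congr rfl fun r _ => ?_
  simp [one_apply, ite_and, and_comm]

lemma trace_conjDiag_pow {ι : Type*} [Fintype ι] [DecidableEq ι] (ν : ι → ℂ)
    (U : unitaryGroup ι ℂ) (m : ℕ) : trace (conjDiag ν U ^ m) = ∑ i, ν i ^ m := by
  have h : (U : Matrix ι ι ℂ)ᴴ * (U : Matrix ι ι ℂ) = 1 := mem_unitaryGroup_iff'.mp U.2
  have h' : (U : Matrix ι ι ℂ) * (U : Matrix ι ι ℂ)ᴴ = 1 := mem_unitaryGroup_iff.mp U.2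
  have hp : conjDiag ν U ^ m = U * diagonal (ν ^ m) * (U : Matrix ι ι ℂ)ᴴ := by
    induction m with
    | zero => simp [h']
    | succ m ih =>
      rw [pow_succ, ih, conjDiag]
      calc _ = (U : Matrix ι ι ℂ) * (diagonal (ν ^ m) * ((U : Matrix ι ι ℂ)ᴴ * U) * diagonal ν)
            * (U : Matrix ι ι ℂ)ᴴ := by noncomm_ring
        _ = _ := by rw [h, mul_one, diagonal_mul_diagonal]; rfl
  rw [hp, trace_mul_comm, ← mul_assoc, h, one_mul, trace_diagonal]
  rfl

end Haar

/-! ### First and second moments of the purity of the partial trace -/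

section Variance

/-- The second moment of `Tr((Tr₂ A)²)` for a spectrum with sum zero: `rep 2` is `(01)(23)`, so the
integrand is `(Tr((Tr₂ A)²))²`. -/
lemma integral_cycleSum_ptrace_four {d₁ d₂ : ℕ} (hd : 4 ≤ d₁ * d₂)
    (μ : Measure (unitaryGroup (Fin (d₁ * d₂)) ℂ)) [μ.IsHaarMeasure] [IsProbabilityMeasure μ]
    (ν : Fin (d₁ * d₂) → ℂ) (hν : ∑ i, ν i = 0) :
    (((d₁ * d₂ : ℂ) ^ 2 - 1) * ((d₁ * d₂ : ℂ) ^ 2 - 4) * ((d₁ * d₂ : ℂ) ^ 2 - 9))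
        * ∫ U, cycleSum (ptrace (conjDiag ν U)) (rep 2) ∂μ
      = ((d₁ : ℂ) ^ 2 * ((d₁ * d₂ : ℂ) ^ 4 - 14 * (d₁ * d₂ : ℂ) ^ 2 + 30)
            + 20 * (d₁ * d₂ : ℂ) ^ 2 - 30 - (d₂ : ℂ) ^ 2 * ((d₁ * d₂ : ℂ) ^ 2 + 6))
          * (∑ i, ν i ^ 2) ^ 2
        - 10 * ((d₁ : ℂ) ^ 2 - 1) * ((d₂ : ℂ) ^ 2 - 1) * (d₁ * d₂) * ∑ i, ν i ^ 4 := by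
  have he : Nonempty (Fin 4 ↪ Fin (d₁ * d₂)) := ⟨Fin.castLEEmb hd⟩
  obtain ⟨c, hconj, hc⟩ := exists_moment_eq μ ν he.some
  obtain ⟨x, hx⟩ : ∃ x : Fin 5 → ℂ, ∀ σ, c σ = x (cls σ) := by
    refine ⟨fun u => c (rep u), fun σ => ?_⟩
    obtain ⟨π, hπ⟩ := exists_conj_rep σ
    conv_lhs => rw [hπ]
    exact hconj π _
  obtain ⟨n, hn⟩ : ∃ n : ℂ, n = d₁ * d₂ := ⟨_, rfl⟩
  have hp (U : unitaryGroup (Fin (d₁ * d₂)) ℂ) : trace (conjDiag ν U) = 0 := by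
    simpa [hν] using trace_conjDiag_pow ν U 1
  -- The linear system for the values `x` of `c` on the classes. On the right are the products of the
  -- power sums of `ν`, of which only those of types `2²` and `4` do not involve `∑ i, ν i = 0`.
  have hT (w : Fin 5) : ∑ u, ∑ v, (classCoeff w u v : ℂ) * (x u * n ^ (![4, 3, 2, 2, 1] v : ℕ))
      = ![0, 0, (∑ i, ν i ^ 2) ^ 2, 0, ∑ i, ν i ^ 4] w := by
    rw [← sum_perm_eq w fun u v => x u * n ^ (![4, 3, 2, 2, 1] v : ℕ)]
    have := integral_cycleSum μ ν hc (rep w)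
    simp only [cycleSum_one, cycleSum_rep, hx, Fintype.card_fin, Nat.cast_mul, ← hn] at this
    rw [← this]
    fin_cases w <;> simp [trace_conjDiag_pow, hp]
  rw [integral_cycleSum_ptrace μ ν hc]
  simp only [cycleSum_one, hx, Fintype.card_fin]
  rw [sum_perm_eq 2 fun u v => x u * ((d₁ : ℂ) ^ (![4, 3, 2, 2, 1] v : ℕ)
    * (d₂ : ℂ) ^ (![4, 3, 2, 2, 1] u : ℕ))]
  have h0 := hT 0
  have h1 := hT 1
  have h2 := hT 2
  have h3 := hT 3
  have h4 := hT 4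
  simp only [Fin.sum_univ_five]
  simp [Fin.sum_univ_five, classCoeff] at h0 h1 h2 h3 h4
  generalize ∑ i, ν i ^ 2 = p₂ at h2 ⊢
  generalize ∑ i, ν i ^ 4 = p₄ at h4 ⊢
  -- The multipliers below invert the system: they are sums of order-four Weingarten functions over
  -- classes, cleared of the denominator `D`.
  obtain ⟨D, hD⟩ : ∃ D : ℂ, D = n ^ 2 * ((n ^ 2 - 1) * (n ^ 2 - 4) * (n ^ 2 - 9)) := ⟨_, rfl⟩
  have x0 : D * x 0 = 3 * (n ^ 2 + 6) * p₂ ^ 2 - 30 * n * p₄ := by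
    rw [hD]
    linear_combination (n^4-8*n^2+6) * h0 - (6*(n*(n^2-4))) * h1 + (3*(n^2+6)) * h2
      + (8*(2*n^2-3)) * h3 - (30*n) * h4
  have x1 : D * x 1 = -(n ^ 3 + 6 * n) * p₂ ^ 2 + 10 * n ^ 2 * p₄ := by
    rw [hD]
    linear_combination (-n*(n^2-4)) * h0 + (n^4+n^2) * h1 - (n^3+6*n) * h2
      - (4*(n^3+n)) * h3 + (10*n^2) * h4
  have x2 : D * x 2 = (n ^ 4 - 6 * n ^ 2 + 18) * p₂ ^ 2 - (4 * n ^ 3 - 6 * n) * p₄ := by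
    rw [hD]
    linear_combination (n^2+6) * h0 - (2*n^3+12*n) * h1 + (n^4-6*n^2+18) * h2
      + (8*(2*n^2-3)) * h3 - (4*n^3-6*n) * h4
  have x3 : D * x 3 = (6 * n ^ 2 - 9) * p₂ ^ 2 - (3 * n ^ 3 + 3 * n) * p₄ := by
    rw [hD]
    linear_combination (2*n^2-3) * h0 - (3*n^3+3*n) * h1 + (6*n^2-9) * h2
      + (n^4+3*n^2+12) * h3 - (3*n^3+3*n) * h4
  have x4 : D * x 4 = -(2 * n ^ 3 - 3 * n) * p₂ ^ 2 + (n ^ 4 + n ^ 2) * p₄ := by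
    rw [hD]
    linear_combination (-5*n) * h0 + (10*n^2) * h1 - (2*n^3-3*n) * h2
      - (4*(n^3+n)) * h3 + (n^4+n^2) * h4
  have hn0 : n ^ 2 ≠ 0 := by
    rw [hn]; exact_mod_cast (by positivity : (d₁ * d₂) ^ 2 ≠ 0)
  rw [← hn]
  refine mul_left_cancel₀ hn0 ?_
  rw [← mul_assoc, ← hD]
  simp [classCoeff]
  subst hn
  linear_combination ((d₁:ℂ)^2*d₂^4) * x0 + (2*(d₁:ℂ)^3*d₂^3+4*d₁*d₂^3) * x1
    + ((d₁:ℂ)^4*d₂^2+2*d₁^2*d₂^2) * x2 + (8*(d₁:ℂ)^2*d₂^2) * x3 + (4*(d₁:ℂ)^3*d₂+2*d₁*d₂) * x4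

/-- The first moment of `Tr((Tr₂ A)²)` for a spectrum with sum zero. -/
lemma integral_cycleSum_ptrace_two {d₁ d₂ : ℕ} (hd : 4 ≤ d₁ * d₂)
    (μ : Measure (unitaryGroup (Fin (d₁ * d₂)) ℂ)) [μ.IsHaarMeasure] [IsProbabilityMeasure μ]
    (ν : Fin (d₁ * d₂) → ℂ) (hν : ∑ i, ν i = 0) :
    ((d₁ * d₂ : ℂ) ^ 2 - 1) * ∫ U, trace (ptrace (conjDiag ν U) ^ 2) ∂μ
      = d₂ * ((d₁ : ℂ) ^ 2 - 1) * ∑ i, ν i ^ 2 := by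
  have he : Nonempty (Fin 2 ↪ Fin (d₁ * d₂)) := ⟨Fin.castLEEmb (by omega)⟩
  obtain ⟨c, -, hc⟩ := exists_moment_eq μ ν he.some
  have hp (U : unitaryGroup (Fin (d₁ * d₂)) ℂ) : trace (conjDiag ν U) = 0 := by
    simpa [hν] using trace_conjDiag_pow ν U 1
  have hone {m : ℕ} (C : Matrix (Fin m) (Fin m) ℂ) :
      cycleSum C (1 : Equiv.Perm (Fin 2)) = trace C ^ 2 := by
    rw [cycleSum, ← (finTwoArrowEquiv _).symm.sum_comp, Fintype.sum_prod_type, sq]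
    simp [trace, Finset.sum_mul_sum]
  have hswap {m : ℕ} (C : Matrix (Fin m) (Fin m) ℂ) :
      cycleSum C (Equiv.swap 0 1 : Equiv.Perm (Fin 2)) = trace (C ^ 2) := by
    rw [cycleSum, ← (finTwoArrowEquiv _).symm.sum_comp, Fintype.sum_prod_type, sq]
    simp [trace, mul_apply]
  have hsum (F : Equiv.Perm (Fin 2) → ℂ) : ∑ σ, F σ = F 1 + F (Equiv.swap 0 1) := by
    have : (Finset.univ : Finset (Equiv.Perm (Fin 2))) = {1, Equiv.swap 0 1} := by decide
    rw [this, Finset.sum_pair (by decide)]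
  have h1 := integral_cycleSum μ ν hc 1
  have h2 := integral_cycleSum μ ν hc (Equiv.swap 0 1)
  have h3 := integral_cycleSum_ptrace μ ν hc (Equiv.swap 0 1)
  simp [hsum, hone, hswap, trace_conjDiag_pow, hp] at h1 h2 h3
  rw [h3]
  have hn : (d₁ * d₂ : ℂ) ≠ 0 := by exact_mod_cast (by omega : d₁ * d₂ ≠ 0)
  refine mul_left_cancel₀ hn ?_
  linear_combination (-((d₁ * d₂ : ℂ) * d₁ * d₂ ^ 2 - (d₁ : ℂ) ^ 2 * d₂)) * h1
    - ((d₁ * d₂ : ℂ) * (d₁ : ℂ) ^ 2 * d₂ - d₁ * d₂ ^ 2) * h2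

lemma ptrace_add_smul_one {d₁ d₂ : ℕ} (A : Matrix (Fin (d₁ * d₂)) (Fin (d₁ * d₂)) ℂ) (t : ℂ) :
    ptrace (A + t • 1) = ptrace A + (t * d₂) • 1 := by
  ext a b
  by_cases h : a = b
  · subst h; simp [ptrace, Finset.sum_add_distrib, mul_comm]
  · simp [ptrace, Finset.sum_add_distrib, h]

lemma trace_ptrace {d₁ d₂ : ℕ} (A : Matrix (Fin (d₁ * d₂)) (Fin (d₁ * d₂)) ℂ) :
    trace (ptrace A) = trace A := by
  simp only [trace, diag, ptrace, of_apply]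
  rw [← finProdFinEquiv.sum_comp, Fintype.sum_prod_type]

lemma conjDiag_add_const {ι : Type*} [Fintype ι] [DecidableEq ι] (ν : ι → ℂ) (t : ℂ)
    (U : unitaryGroup ι ℂ) : conjDiag (fun i => ν i + t) U = conjDiag ν U + t • 1 := by
  have h : (U : Matrix ι ι ℂ) * (U : Matrix ι ι ℂ)ᴴ = 1 := mem_unitaryGroup_iff.mp U.2
  have hd : (diagonal fun i => ν i + t) = diagonal ν + t • (1 : Matrix ι ι ℂ) := by
    rw [smul_one_eq_diagonal, diagonal_add]
  rw [conjDiag, hd, mul_add, add_mul, mul_smul_comm, smul_mul_assoc, mul_one, h, conjDiag]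

end Variance

/-- Variance of `v(U) = (1/d₁)Tr(B²) − ((1/d₁)Tr B)²`, where
`B = d₂⁻¹ Tr₂ (U diag(λ) Uᴴ)`, for `U` Haar-distributed on `U(d₁d₂)`. -/
theorem stmt9 (d₁ d₂ : ℕ) (hd₁ : 0 < d₁) (hd₂ : 0 < d₂) (hd : 4 ≤ d₁ * d₂)
    (lam : Fin (d₁ * d₂) → ℝ)
    (μ1 μ2 μ3 μ4 : ℝ)
    (hμ1 : μ1 = (∑ i, lam i ^ 1) / (d₁ * d₂))
    (hμ2 : μ2 = (∑ i, lam i ^ 2) / (d₁ * d₂))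
    (hμ3 : μ3 = (∑ i, lam i ^ 3) / (d₁ * d₂))
    (hμ4 : μ4 = (∑ i, lam i ^ 4) / (d₁ * d₂))
    (μ : Measure (Matrix.unitaryGroup (Fin (d₁ * d₂)) ℂ))
    [μ.IsHaarMeasure] [IsProbabilityMeasure μ]
    (v : Matrix.unitaryGroup (Fin (d₁ * d₂)) ℂ → ℂ)
    (hv : ∀ U, v U =
      (d₁ : ℂ)⁻¹ * Matrix.trace
          (((d₂ : ℂ)⁻¹ • ptrace ((U : Matrix (Fin (d₁ * d₂)) (Fin (d₁ * d₂)) ℂ) *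
              Matrix.diagonal (fun i => (lam i : ℂ)) *
              (U : Matrix (Fin (d₁ * d₂)) (Fin (d₁ * d₂)) ℂ)ᴴ)) *
            ((d₂ : ℂ)⁻¹ • ptrace ((U : Matrix (Fin (d₁ * d₂)) (Fin (d₁ * d₂)) ℂ) *
              Matrix.diagonal (fun i => (lam i : ℂ)) *
              (U : Matrix (Fin (d₁ * d₂)) (Fin (d₁ * d₂)) ℂ)ᴴ))) -
        ((d₁ : ℂ)⁻¹ * Matrix.trace
          ((d₂ : ℂ)⁻¹ • ptrace ((U : Matrix (Fin (d₁ * d₂)) (Fin (d₁ * d₂)) ℂ) *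
              Matrix.diagonal (fun i => (lam i : ℂ)) *
              (U : Matrix (Fin (d₁ * d₂)) (Fin (d₁ * d₂)) ℂ)ᴴ))) ^ 2) :
    (∫ U, (v U) ^ 2 ∂μ) - (∫ U, v U ∂μ) ^ 2 =
      ((2 * ((d₁ : ℂ) ^ 2 - 1) * ((d₂ : ℂ) ^ 2 - 1)) /
          ((d₂ : ℂ) ^ 2 * ((d₁ : ℂ) ^ 2 * (d₂ : ℂ) ^ 2 - 1) ^ 2 *
            ((d₁ : ℂ) ^ 4 * (d₂ : ℂ) ^ 4 - 13 * (d₁ : ℂ) ^ 2 * (d₂ : ℂ) ^ 2 + 36))) *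
        ((d₁ : ℂ) ^ 4 * (d₂ : ℂ) ^ 4 * ((μ1 : ℂ) ^ 2 - (μ2 : ℂ)) ^ 2 +
          (d₁ : ℂ) ^ 2 * (d₂ : ℂ) ^ 2 *
            (11 * (μ1 : ℂ) ^ 4 - 22 * (μ2 : ℂ) * (μ1 : ℂ) ^ 2 + 20 * (μ3 : ℂ) * (μ1 : ℂ) -
              4 * (μ2 : ℂ) ^ 2 - 5 * (μ4 : ℂ)) +
          5 * (3 * (μ2 : ℂ) ^ 2 - 4 * (μ1 : ℂ) * (μ3 : ℂ) + (μ4 : ℂ))) := by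
  have hd₁0 : (d₁ : ℂ) ≠ 0 := by exact_mod_cast hd₁.ne'
  have hd₂0 : (d₂ : ℂ) ≠ 0 := by exact_mod_cast hd₂.ne'
  set ν : Fin (d₁ * d₂) → ℂ := fun i => (lam i : ℂ) - μ1 with hν
  have hs (k : ℕ) : ∑ i, (lam i : ℂ) ^ k
      = (d₁ * d₂ : ℂ) * (((∑ i, lam i ^ k) / (d₁ * d₂) : ℝ) : ℂ) := by
    push_cast
    field_simp
  have hs1 : ∑ i, (lam i : ℂ) = (d₁ * d₂ : ℂ) * μ1 := by
    have := hs 1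
    rw [← hμ1] at this
    simpa using this
  have hs2 : ∑ i, (lam i : ℂ) ^ 2 = (d₁ * d₂ : ℂ) * μ2 := by rw [hs, ← hμ2]
  have hs3 : ∑ i, (lam i : ℂ) ^ 3 = (d₁ * d₂ : ℂ) * μ3 := by rw [hs, ← hμ3]
  have hs4 : ∑ i, (lam i : ℂ) ^ 4 = (d₁ * d₂ : ℂ) * μ4 := by rw [hs, ← hμ4]
  have hν1 : ∑ i, ν i = 0 := by
    simp [hν, hs1]
  have hν2 : ∑ i, ν i ^ 2 = (d₁ * d₂ : ℂ) * (μ2 - μ1 ^ 2) := by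
    have : ∀ i, ν i ^ 2 = (lam i : ℂ) ^ 2 - 2 * μ1 * lam i + μ1 ^ 2 := fun i => by
      simp only [hν]; ring
    simp only [this, Finset.sum_add_distrib, Finset.sum_sub_distrib, ← Finset.mul_sum, hs1, hs2]
    simp
    ring
  have hν4 : ∑ i, ν i ^ 4
      = (d₁ * d₂ : ℂ) * (μ4 - 4 * μ1 * μ3 + 6 * μ1 ^ 2 * μ2 - 3 * μ1 ^ 4) := by
    have : ∀ i, ν i ^ 4 = (lam i : ℂ) ^ 4 - 4 * μ1 * lam i ^ 3 + 6 * μ1 ^ 2 * lam i ^ 2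
        - 4 * μ1 ^ 3 * lam i + μ1 ^ 4 := fun i => by
      simp only [hν]; ring
    simp only [this, Finset.sum_add_distrib, Finset.sum_sub_distrib, ← Finset.mul_sum, hs1, hs2,
      hs3, hs4]
    simp
    ring
  have hv' : ∀ U, v U = ((d₁ : ℂ)⁻¹ * (d₂ : ℂ)⁻¹ ^ 2) * trace (ptrace (conjDiag ν U) ^ 2) := by
    intro U
    have hA : (U : Matrix (Fin (d₁ * d₂)) (Fin (d₁ * d₂)) ℂ)
        * diagonal (fun i => (lam i : ℂ)) * (U : Matrix (Fin (d₁ * d₂)) (Fin (d₁ * d₂)) ℂ)ᴴ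
        = conjDiag ν U + (μ1 : ℂ) • 1 := by
      rw [← conjDiag_add_const]
      simp [hν, conjDiag]
    have h0 : trace (ptrace (conjDiag ν U)) = 0 := by
      rw [trace_ptrace]
      simpa [hν1] using trace_conjDiag_pow ν U 1
    rw [hv, hA, ptrace_add_smul_one]
    simp only [trace_smul, trace_add, add_mul, mul_add, h0, mul_one, one_mul,
      smul_mul_assoc, mul_smul_comm, trace_one, Fintype.card_fin, smul_eq_mul, sq (ptrace _)]
    field_simp
    ring
  have hI1 : ∫ U, v U ∂μ = ((d₁ : ℂ)⁻¹ * (d₂ : ℂ)⁻¹ ^ 2)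
      * ∫ U, trace (ptrace (conjDiag ν U) ^ 2) ∂μ := by
    simp only [hv', integral_const_mul]
  have hI2 : ∫ U, v U ^ 2 ∂μ = ((d₁ : ℂ)⁻¹ * (d₂ : ℂ)⁻¹ ^ 2) ^ 2
      * ∫ U, cycleSum (ptrace (conjDiag ν U)) (rep 2) ∂μ := by
    rw [← integral_const_mul]
    refine integral_congr_ae (.of_forall fun U => ?_)
    change v U ^ 2 = _ * cycleSum _ _
    rw [hv', cycleSum_rep, mul_pow]
    rfl
  have e2 := integral_cycleSum_ptrace_two hd μ ν hν1
  have e4 := integral_cycleSum_ptrace_four hd μ ν hν1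
  -- As `d₁ * d₂ ≥ 4`, no denominator vanishes.
  have hne (m : ℕ) (hm : m < 16) : (d₁ * d₂ : ℂ) ^ 2 - m ≠ 0 := by
    rw [sub_ne_zero]
    have : (d₁ * d₂) ^ 2 ≠ m := by nlinarith
    exact_mod_cast this
  have hne1 : (d₁ * d₂ : ℂ) ^ 2 - 1 ≠ 0 := by simpa using hne 1 (by norm_num)
  have hne4 : (d₁ * d₂ : ℂ) ^ 2 - 4 ≠ 0 := by simpa using hne 4 (by norm_num)
  have hne9 : (d₁ * d₂ : ℂ) ^ 2 - 9 ≠ 0 := by simpa using hne 9 (by norm_num)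
  rw [hI1, hI2]
  rw [hν2] at e2 e4
  rw [hν4] at e4
  replace e2 := (eq_div_iff hne1).mpr ((mul_comm _ _).trans e2)
  replace e4 := (eq_div_iff (mul_ne_zero (mul_ne_zero hne1 hne4) hne9)).mpr
    ((mul_comm _ _).trans e4)
  have hfac : (d₁ : ℂ) ^ 4 * (d₂ : ℂ) ^ 4 - 13 * (d₁ : ℂ) ^ 2 * (d₂ : ℂ) ^ 2 + 36
      = ((d₁ * d₂ : ℂ) ^ 2 - 4) * ((d₁ * d₂ : ℂ) ^ 2 - 9) := by ring
  rw [e2, e4, hfac]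
  simp only [mul_pow (d₁ : ℂ) d₂] at hne1 hne4 hne9 ⊢
  field_simp
  ring
end

section
/- Define T(u) = 1 + 3u², W(u) = 36u² + 2, Y(u) = W(u) + √(W(u)² − 4T(u)³), and u₊ = √((11 + 5√5)/2). Then ∫_{−u₊}^{u₊} |u| · | (Y(u)^{2/3} − 2^{2/3}·T(u)) / (2^{4/3}·√3·π·u·Y(u)^{1/3}) | du = 1/2 + 2/π. -/
/-!
The Cauchy transform `g` of the law satisfies the cubic `u g³ + g² - u g + 1 = 0`. This curve is
rational in the real root `g = -1 / v`: that root gives `u = v (1 + v²) / (1 - v²)`, an increasing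
function of `v` taking `[0, v₊]` onto `[0, u₊]`, where `v₊² = (√5 - 1) / 2` is the positive root of
`D(w) = 1 - w - w²` (`w` stands for `v²` throughout). Dividing out the real root leaves a quadratic
for the other two, so in terms of `v` all radicals in the density collapse to the single root
`√(D(v²))`: Cardano's `s = (Y / 2)^(1/3)` becomes
`((1 + 2 v²) + √3 v √(D(v²))) / (1 - v²)` (`Yfun_param`), and `|u|` times the density becomes
`v √(D(v²)) / (π (1 - v²))` (`absDens_param`).

The integrand is even and continuous, so the integral is twice its integral over `[0, u₊]`. After
the substitution it has the elementary antiderivative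
`(1 / 2π) (arcsin (w / √(1 - w)) + (1 - 5 / (1 - w) + 2 / (1 - w)²) √(D(w)))` at `w = v²`
(`hasDerivAt_prim`). The bracket goes from `-2` at `w = 0` to `π / 2` at `w = v₊²`.
-/

open MeasureTheory Real

/-- `T(u) = 1 + 3u²` -/
noncomputable def Tfun (u : ℝ) : ℝ := 1 + 3 * u ^ 2

/-- `W(u) = 36u² + 2` -/
noncomputable def Wfun (u : ℝ) : ℝ := 36 * u ^ 2 + 2

/-- `Y(u) = W(u) + √(W(u)² − 4T(u)³)` -/
noncomputable def Yfun (u : ℝ) : ℝ := Wfun u + Real.sqrt ((Wfun u) ^ 2 - 4 * (Tfun u) ^ 3)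

/-- `u₊ = √((11 + 5√5)/2)` -/
noncomputable def uPlus : ℝ := Real.sqrt ((11 + 5 * Real.sqrt 5) / 2)

/-! ### Evenness and continuity of the integrand -/

lemma Wfun_pos (u : ℝ) : 0 < Wfun u := by unfold Wfun; positivity

lemma Yfun_pos (u : ℝ) : 0 < Yfun u := by
  unfold Yfun
  have := Wfun_pos u
  positivity

lemma Tfun_neg (u : ℝ) : Tfun (-u) = Tfun u := by simp [Tfun]

lemma Yfun_neg (u : ℝ) : Yfun (-u) = Yfun u := by simp [Yfun, Tfun, Wfun]

/-- `|u|` times the absolute value of the density, with the factor `u` of the denominator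
cancelled, which makes it continuous at `0`. -/
noncomputable def absDens (u : ℝ) : ℝ :=
  |((Yfun u) ^ ((2 : ℝ)/3) - 2 ^ ((2 : ℝ)/3) * Tfun u) /
    (2 ^ ((4 : ℝ)/3) * Real.sqrt 3 * Real.pi * (Yfun u) ^ ((1 : ℝ)/3))|

/-- At `u = 0` the left side vanishes because of `|u|` and the right side because `Y(0) = 2`
and `T(0) = 1`. -/
lemma integrand_eq (u : ℝ) :
    |u| * |((Yfun u) ^ ((2 : ℝ)/3) - 2 ^ ((2 : ℝ)/3) * Tfun u) /
      (2 ^ ((4 : ℝ)/3) * Real.sqrt 3 * Real.pi * u * (Yfun u) ^ ((1 : ℝ)/3))| = absDens u := by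
  unfold absDens
  rcases eq_or_ne u 0 with rfl | hu
  · have hY : Yfun 0 = 2 := by norm_num [Yfun, Wfun, Tfun]
    have hT : Tfun 0 = 1 := by norm_num [Tfun]
    rw [hY, hT]
    simp
  · have hy : (Yfun u) ^ ((1 : ℝ)/3) ≠ 0 := (Real.rpow_pos_of_pos (Yfun_pos u) _).ne'
    have h2 : (2 : ℝ) ^ ((4 : ℝ)/3) ≠ 0 := (Real.rpow_pos_of_pos two_pos _).ne'
    rw [← abs_mul]
    congr 1
    field_simp

lemma absDens_neg (u : ℝ) : absDens (-u) = absDens u := by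
  simp only [absDens, Tfun_neg, Yfun_neg]

lemma continuous_absDens : Continuous absDens := by
  have hY : Continuous Yfun := by unfold Yfun Wfun Tfun; fun_prop
  have hT : Continuous Tfun := by unfold Tfun; fun_prop
  have hp : ∀ r : ℝ, Continuous fun u => (Yfun u) ^ r := fun r =>
    hY.rpow_const fun u => Or.inl (Yfun_pos u).ne'
  unfold absDens
  refine (Continuous.div ((hp _).sub (continuous_const.mul hT))
    (continuous_const.mul (hp _)) fun u => ?_).abs
  exact mul_ne_zero (by positivity) (Real.rpow_pos_of_pos (Yfun_pos u) _).ne'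

/-! ### Rational parametrization of the cubic -/

/-- The parametrization of the variable `u` by the inverse `v` of the real root of the cubic. -/
noncomputable def uPar (v : ℝ) : ℝ := v * (1 + v ^ 2) / (1 - v ^ 2)

/-- Cardano's `(Y / 2)^(1/3)` along the parametrization. -/
noncomputable def sPar (v : ℝ) : ℝ :=
  ((1 + 2 * v ^ 2) + √3 * v * √(1 - v ^ 2 - v ^ 4)) / (1 - v ^ 2)

/-- The conjugate of `sPar`. The two have product `T` and sum of cubes `W`. -/
noncomputable def tPar (v : ℝ) : ℝ :=
  ((1 + 2 * v ^ 2) - √3 * v * √(1 - v ^ 2 - v ^ 4)) / (1 - v ^ 2)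

lemma one_sub_sq_pos {v : ℝ} (hD : 0 ≤ 1 - v ^ 2 - v ^ 4) : 0 < 1 - v ^ 2 := by
  by_contra! h
  nlinarith [sq_nonneg v]

lemma sPar_pos {v : ℝ} (hv : 0 ≤ v) (hD : 0 ≤ 1 - v ^ 2 - v ^ 4) : 0 < sPar v := by
  have := one_sub_sq_pos hD
  unfold sPar
  positivity

lemma sq_radical {v : ℝ} (hD : 0 ≤ 1 - v ^ 2 - v ^ 4) :
    (√3 * v * √(1 - v ^ 2 - v ^ 4)) ^ 2 = 3 * v ^ 2 * (1 - v ^ 2 - v ^ 4) := by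
  rw [mul_pow, mul_pow, Real.sq_sqrt hD, Real.sq_sqrt (by norm_num)]

lemma sPar_mul_tPar {v : ℝ} (hD : 0 ≤ 1 - v ^ 2 - v ^ 4) :
    sPar v * tPar v = Tfun (uPar v) := by
  have hp := (one_sub_sq_pos hD).ne'
  have hb := sq_radical hD
  unfold sPar tPar Tfun uPar
  set b := √3 * v * √(1 - v ^ 2 - v ^ 4)
  field_simp
  linear_combination -hb

lemma sPar_cube_add {v : ℝ} (hD : 0 ≤ 1 - v ^ 2 - v ^ 4) :
    sPar v ^ 3 + tPar v ^ 3 = Wfun (uPar v) := by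
  have hp := (one_sub_sq_pos hD).ne'
  have hb := sq_radical hD
  unfold sPar tPar Wfun uPar
  set b := √3 * v * √(1 - v ^ 2 - v ^ 4)
  field_simp
  linear_combination (6 * (1 + 2 * v ^ 2)) * hb

lemma tPar_le_sPar {v : ℝ} (hv : 0 ≤ v) (hD : 0 ≤ 1 - v ^ 2 - v ^ 4) : tPar v ≤ sPar v := by
  have hp := one_sub_sq_pos hD
  have hb : 0 ≤ √3 * v * √(1 - v ^ 2 - v ^ 4) := by positivity
  unfold sPar tPar
  gcongr
  linarith

lemma Yfun_param {v : ℝ} (hv : 0 ≤ v) (hD : 0 ≤ 1 - v ^ 2 - v ^ 4) :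
    Yfun (uPar v) = 2 * sPar v ^ 3 := by
  have hle : tPar v ^ 3 ≤ sPar v ^ 3 :=
    (Odd.strictMono_pow (by decide : Odd 3)).monotone (tPar_le_sPar hv hD)
  have hsq : Wfun (uPar v) ^ 2 - 4 * Tfun (uPar v) ^ 3 = (sPar v ^ 3 - tPar v ^ 3) ^ 2 := by
    rw [← sPar_mul_tPar hD, ← sPar_cube_add hD]
    ring
  rw [Yfun, hsq, Real.sqrt_sq (by linarith), ← sPar_cube_add hD]
  ring

lemma absDens_param {v : ℝ} (hv : 0 ≤ v) (hD : 0 ≤ 1 - v ^ 2 - v ^ 4) :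
    absDens (uPar v) = v * √(1 - v ^ 2 - v ^ 4) / (π * (1 - v ^ 2)) := by
  have hp := one_sub_sq_pos hD
  have hs := sPar_pos hv hD
  have h1 : (2 * sPar v ^ 3) ^ ((1 : ℝ)/3) = 2 ^ ((1 : ℝ)/3) * sPar v := by
    rw [Real.mul_rpow (by norm_num) (by positivity), ← Real.rpow_natCast, ← Real.rpow_mul hs.le]
    norm_num
  have h2 : (2 * sPar v ^ 3) ^ ((2 : ℝ)/3) = 2 ^ ((2 : ℝ)/3) * sPar v ^ 2 := by
    rw [Real.mul_rpow (by norm_num) (by positivity), ← Real.rpow_natCast, ← Real.rpow_mul hs.le,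
      ← Real.rpow_natCast]
    norm_num
  have h43 : (2 : ℝ) ^ ((4 : ℝ)/3) * 2 ^ ((1 : ℝ)/3) = 2 * 2 ^ ((2 : ℝ)/3) := by
    rw [← Real.rpow_add two_pos, ← Real.rpow_one_add' two_pos.le (by norm_num)]
    norm_num
  have hst : sPar v - tPar v = 2 * √3 * (v * √(1 - v ^ 2 - v ^ 4) / (1 - v ^ 2)) := by
    unfold sPar tPar
    field_simp
    ring
  have h2p : (2 : ℝ) ^ ((2 : ℝ)/3) ≠ 0 := (Real.rpow_pos_of_pos two_pos _).ne'
  have h3 : √3 ≠ 0 := by positivity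
  rw [absDens, Yfun_param hv hD, ← sPar_mul_tPar hD, h1, h2]
  have key : (2 ^ ((2 : ℝ)/3) * sPar v ^ 2 - 2 ^ ((2 : ℝ)/3) * (sPar v * tPar v)) /
      (2 ^ ((4 : ℝ)/3) * √3 * π * (2 ^ ((1 : ℝ)/3) * sPar v)) =
      v * √(1 - v ^ 2 - v ^ 4) / (π * (1 - v ^ 2)) := by
    calc _ = (2 ^ ((2 : ℝ)/3) * sPar v * (sPar v - tPar v)) /
          ((2 ^ ((4 : ℝ)/3) * 2 ^ ((1 : ℝ)/3)) * √3 * π * sPar v) := by ring_nf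
      _ = _ := by
        rw [h43, hst]
        field_simp
  rw [key, abs_of_nonneg (by positivity)]

lemma hasDerivAt_uPar {v : ℝ} (hp : 0 < 1 - v ^ 2) :
    HasDerivAt uPar ((1 + 4 * v ^ 2 - v ^ 4) / (1 - v ^ 2) ^ 2) v := by
  have hsq : HasDerivAt (fun x : ℝ => x ^ 2) (2 * v) v := by simpa using hasDerivAt_pow 2 v
  refine (((hasDerivAt_id v).mul (hsq.const_add 1)).div (hsq.const_sub 1) hp.ne').congr_deriv ?_
  simp only [id, Pi.mul_apply]
  congr 1
  ring

/-! ### The antiderivative -/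

/-- Antiderivative, in the variable `w = v²`, of the integrand in rational coordinates. -/
noncomputable def prim (w : ℝ) : ℝ :=
  arcsin (w / √(1 - w)) + (1 - 5 / (1 - w) + 2 / (1 - w) ^ 2) * √(1 - w - w ^ 2)

lemma hasDerivAt_prim {w : ℝ} (hw : 0 ≤ w) (hD : 0 < 1 - w - w ^ 2) :
    HasDerivAt prim ((1 + 4 * w - w ^ 2) * √(1 - w - w ^ 2) / (1 - w) ^ 3) w := by
  have hp : 0 < 1 - w := by nlinarith
  have hsp : 0 < √(1 - w) := Real.sqrt_pos.2 hp
  have hsD : 0 < √(1 - w - w ^ 2) := Real.sqrt_pos.2 hD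
  have hsp2 : √(1 - w) ^ 2 = 1 - w := Real.sq_sqrt hp.le
  have hsD2 : √(1 - w - w ^ 2) ^ 2 = 1 - w - w ^ 2 := Real.sq_sqrt hD.le
  have hlin : HasDerivAt (fun x : ℝ => 1 - x) (-1) w := by
    simpa using (hasDerivAt_id w).const_sub 1
  have hq : HasDerivAt (fun x : ℝ => 1 - x - x ^ 2) (-1 - 2 * w) w := by
    exact (hlin.sub (hasDerivAt_pow 2 w)).congr_deriv (by simp)
  have hin : HasDerivAt (fun x : ℝ => x / √(1 - x)) ((2 - w) / (2 * √(1 - w) ^ 3)) w := by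
    refine ((hasDerivAt_id w).div (hlin.sqrt hp.ne') hsp.ne').congr_deriv ?_
    simp only [id]
    field_simp
    rw [hsp2]
    ring
  -- `1 - (w / √(1 - w))² = D(w) / (1 - w)`, which drives the derivative of the `arcsin` term.
  have hcos : √(1 - (w / √(1 - w)) ^ 2) = √(1 - w - w ^ 2) / √(1 - w) := by
    rw [← Real.sqrt_div hD.le, div_pow, hsp2]
    congr 1
    field_simp
  have hlt : (w / √(1 - w)) ^ 2 < 1 := by
    rw [div_pow, hsp2, div_lt_one hp]
    linarith
  have h0 : 0 ≤ w / √(1 - w) := by positivity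
  have harc := (Real.hasDerivAt_arcsin (x := w / √(1 - w)) (by linarith)
    (by rintro h; rw [h] at hlt; norm_num at hlt)).comp w hin
  have hR : HasDerivAt (fun x : ℝ => 1 - 5 / (1 - x) + 2 / (1 - x) ^ 2)
      (-5 / (1 - w) ^ 2 + 4 / (1 - w) ^ 3) w := by
    refine ((((hasDerivAt_const w (5 : ℝ)).div hlin hp.ne').const_sub 1).add
      ((hasDerivAt_const w (2 : ℝ)).div (hlin.pow 2) (pow_ne_zero 2 hp.ne'))).congr_deriv ?_
    simp only [Pi.pow_apply]
    field_simp
    ring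
  refine (harc.add (hR.mul (hq.sqrt hD.ne'))).congr_deriv ?_
  rw [hcos]
  generalize √(1 - w) = a at *
  generalize √(1 - w - w ^ 2) = d at *
  have ha3 : a ^ 3 = a * (1 - w) := by rw [← hsp2]; ring
  rw [ha3]
  field_simp
  rw [hsD2]
  ring

/-! ### The right edge of the support -/

/-- The value `v₊` of the parameter at the right edge `u₊` of the support. -/
noncomputable def vPlus : ℝ := √((√5 - 1) / 2)

lemma vPlus_nonneg : 0 ≤ vPlus := Real.sqrt_nonneg _

lemma vPlus_sq : vPlus ^ 2 = (√5 - 1) / 2 := by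
  have : 1 ≤ √5 := Real.one_le_sqrt.2 (by norm_num)
  exact Real.sq_sqrt (by linarith)

lemma vPlus_root : 1 - vPlus ^ 2 - vPlus ^ 4 = 0 := by
  have h5 : √5 ^ 2 = 5 := Real.sq_sqrt (by norm_num)
  have h4 : vPlus ^ 4 = (vPlus ^ 2) ^ 2 := by ring
  rw [h4, vPlus_sq]
  linear_combination (-1/4) * h5

lemma radicand_nonneg {v : ℝ} (h : v ∈ Set.Icc 0 vPlus) : 0 ≤ 1 - v ^ 2 - v ^ 4 := by
  have h2 : v ^ 2 ≤ vPlus ^ 2 := pow_le_pow_left₀ h.1 h.2 2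
  have h4 : v ^ 4 ≤ vPlus ^ 4 := pow_le_pow_left₀ h.1 h.2 4
  linarith [vPlus_root]

lemma radicand_pos {v : ℝ} (h : v ∈ Set.Ioo 0 vPlus) : 0 < 1 - v ^ 2 - v ^ 4 := by
  have h2 : v ^ 2 < vPlus ^ 2 := pow_lt_pow_left₀ h.2 h.1.le (by norm_num)
  have h4 : v ^ 4 < vPlus ^ 4 := pow_lt_pow_left₀ h.2 h.1.le (by norm_num)
  linarith [vPlus_root]

lemma uPar_zero : uPar 0 = 0 := by simp [uPar]

lemma uPar_vPlus : uPar vPlus = uPlus := by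
  have hp := one_sub_sq_pos vPlus_root.ge
  have hv := vPlus_nonneg
  have h5 : √5 ^ 2 = 5 := Real.sq_sqrt (by norm_num)
  rw [uPlus, eq_comm, Real.sqrt_eq_iff_mul_self_eq (by positivity)
    (by unfold uPar; positivity)]
  have : uPar vPlus * uPar vPlus = vPlus ^ 2 * (1 + vPlus ^ 2) ^ 2 / (1 - vPlus ^ 2) ^ 2 := by
    unfold uPar
    rw [← sq, div_pow, mul_pow]
  rw [this]
  rw [vPlus_sq] at hp ⊢
  rw [div_eq_div_iff (by norm_num) (pow_ne_zero 2 hp.ne')]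
  generalize √5 = r at *
  have h3 : r ^ 3 = 5 * r := by rw [pow_succ, h5]
  ring_nf
  rw [h3, h5]
  ring

/-! ### Evaluation of the integral -/

lemma integral_param :
    ∫ v in (0 : ℝ)..vPlus, v * √(1 - v ^ 2 - v ^ 4) / (π * (1 - v ^ 2)) *
      ((1 + 4 * v ^ 2 - v ^ 4) / (1 - v ^ 2) ^ 2) = (1 / (2 * π)) * (π / 2 + 2) := by
  have hne : ∀ v ∈ Set.Icc 0 vPlus, 1 - v ^ 2 ≠ 0 := fun v hv =>
    (one_sub_sq_pos (radicand_nonneg hv)).ne'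
  have hcont : ContinuousOn (fun v : ℝ => (1 / (2 * π)) * prim (v ^ 2)) (Set.Icc 0 vPlus) := by
    have hs : ∀ v ∈ Set.Icc 0 vPlus, √(1 - v ^ 2) ≠ 0 := fun v hv =>
      (Real.sqrt_pos.2 (one_sub_sq_pos (radicand_nonneg hv))).ne'
    have hs2 : ∀ v ∈ Set.Icc 0 vPlus, (1 - v ^ 2) ^ 2 ≠ 0 := fun v hv => pow_ne_zero 2 (hne v hv)
    have harc : ContinuousOn (fun v : ℝ => arcsin (v ^ 2 / √(1 - v ^ 2))) (Set.Icc 0 vPlus) :=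
      Real.continuous_arcsin.comp_continuousOn (by fun_prop (disch := assumption))
    unfold prim
    fun_prop (disch := assumption)
  have hder : ∀ v ∈ Set.Ioo 0 vPlus, HasDerivAt (fun v : ℝ => (1 / (2 * π)) * prim (v ^ 2))
      (v * √(1 - v ^ 2 - v ^ 4) / (π * (1 - v ^ 2)) *
      ((1 + 4 * v ^ 2 - v ^ 4) / (1 - v ^ 2) ^ 2)) v := by
    intro v hv
    have hD := radicand_pos hv
    have hp := one_sub_sq_pos hD.le
    have h4 : v ^ 4 = (v ^ 2) ^ 2 := by ring
    have hsq : HasDerivAt (fun x : ℝ => x ^ 2) (2 * v) v := by simpa using hasDerivAt_pow 2 v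
    rw [h4] at hD
    rw [h4]
    refine ((HasDerivAt.comp (h := fun x : ℝ => x ^ 2) v (hasDerivAt_prim (sq_nonneg v) hD)
      hsq).const_mul (1 / (2 * π))).congr_deriv ?_
    field_simp
  have hint : ContinuousOn (fun v : ℝ => v * √(1 - v ^ 2 - v ^ 4) / (π * (1 - v ^ 2)) *
      ((1 + 4 * v ^ 2 - v ^ 4) / (1 - v ^ 2) ^ 2)) (Set.Icc 0 vPlus) := by
    have h1 : ∀ v ∈ Set.Icc 0 vPlus, π * (1 - v ^ 2) ≠ 0 := fun v hv =>
      mul_ne_zero Real.pi_ne_zero (hne v hv)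
    have h2 : ∀ v ∈ Set.Icc 0 vPlus, (1 - v ^ 2) ^ 2 ≠ 0 := fun v hv => pow_ne_zero 2 (hne v hv)
    fun_prop (disch := assumption)
  rw [intervalIntegral.integral_eq_sub_of_hasDerivAt_of_le vPlus_nonneg hcont hder
    (hint.intervalIntegrable_of_Icc vPlus_nonneg)]
  have hroot : 1 - vPlus ^ 2 - (vPlus ^ 2) ^ 2 = 0 := by linear_combination vPlus_root
  have hpos : 0 < vPlus ^ 2 := by
    have := one_sub_sq_pos vPlus_root.ge
    nlinarith [sq_nonneg vPlus]
  have hend : prim (vPlus ^ 2) = π / 2 := by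
    -- At the root of `D` one has `1 - w = w²`.
    have h : √(1 - vPlus ^ 2) = vPlus ^ 2 := by
      rw [show 1 - vPlus ^ 2 = (vPlus ^ 2) ^ 2 by linarith, Real.sqrt_sq hpos.le]
    rw [prim, hroot, h, div_self hpos.ne']
    simp
  have hstart : prim (0 ^ 2) = -2 := by norm_num [prim]
  rw [hend, hstart]
  ring

lemma integral_absDens : ∫ u in (0 : ℝ)..uPlus, absDens u = (1 / (2 * π)) * (π / 2 + 2) := by
  have hI : Set.uIcc 0 vPlus = Set.Icc 0 vPlus := Set.uIcc_of_le vPlus_nonneg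
  have hsub := intervalIntegral.integral_comp_mul_deriv (a := 0) (b := vPlus) (f := uPar)
    (f' := fun v => (1 + 4 * v ^ 2 - v ^ 4) / (1 - v ^ 2) ^ 2) (g := absDens)
    (fun v hv => hasDerivAt_uPar (one_sub_sq_pos (radicand_nonneg (hI ▸ hv))))
    (by
      rw [hI]
      have h2 : ∀ v ∈ Set.Icc 0 vPlus, (1 - v ^ 2) ^ 2 ≠ 0 := fun v hv =>
        pow_ne_zero 2 (one_sub_sq_pos (radicand_nonneg hv)).ne'
      fun_prop (disch := assumption))
    continuous_absDens
  rw [uPar_zero, uPar_vPlus] at hsub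
  rw [← hsub, ← integral_param]
  refine intervalIntegral.integral_congr fun v hv => ?_
  rw [hI] at hv
  simp only [Function.comp_apply]
  rw [absDens_param hv.1 (radicand_nonneg hv)]

/-- The first absolute moment of the subtracted Marčenko–Pastur distribution `SMP₁,₁`
equals `1/2 + 2/π`. -/
theorem stmt12 :
    (∫ u in Set.Icc (-uPlus) uPlus,
        |u| * |((Yfun u) ^ ((2 : ℝ)/3) - 2 ^ ((2 : ℝ)/3) * Tfun u) /
          (2 ^ ((4 : ℝ)/3) * Real.sqrt 3 * Real.pi * u * (Yfun u) ^ ((1 : ℝ)/3))|) =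
      1/2 + 2/Real.pi := by
  have hu : 0 ≤ uPlus := Real.sqrt_nonneg _
  have hint : ∀ a b, IntervalIntegrable absDens volume a b := fun a b =>
    continuous_absDens.intervalIntegrable a b
  have hneg : ∫ u in (-uPlus)..0, absDens u = ∫ u in (0 : ℝ)..uPlus, absDens u := by
    simpa [absDens_neg] using
      (intervalIntegral.integral_comp_neg (a := 0) (b := uPlus) absDens).symm
  simp only [integrand_eq]
  rw [integral_Icc_eq_integral_Ioc, ← intervalIntegral.integral_of_le (by linarith),
    ← intervalIntegral.integral_add_adjacent_intervals (hint _ 0) (hint 0 _), hneg,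
    integral_absDens]
  field_simp
  ring
end
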